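/- Let k ≥ 4 be an integer, let ω > 1 be real, and let t be a real number with t ≥ ⌊k/2⌋. Then there is a constant C = C(k, ω, t) > 0 such that for every P ≥ 2 and every subset 𝒜 of the integers in [1,P], one has ∫_𝔎 Υ_ω(α) |Σ_{x ∈ 𝒜} e(αx^k)|^{2t} dα ≤ C·P^{2t−k}. -/

import Mathlib

open MeasureTheory
open scoped Classical

/-- `e(α) = exp(2πiα)`. -/
noncomputable def eC (α : ℝ) : ℂ := Complex.exp (2 * Real.pi * Complex.I * α)

/-- The value of the multiplicative function `w_k` at the prime power `p^e` (`e ≥ 1`):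
writing `e = uk + v` with `u ≥ 0` and `1 ≤ v ≤ k`, one has `w_k(p^{uk+1}) = k p^{−u−1/2}`
and `w_k(p^{uk+v}) = p^{−u−1}` for `2 ≤ v ≤ k`. -/
noncomputable def wkLocal (k p e : ℕ) : ℝ :=
  if (e - 1) % k = 0 then (k : ℝ) * (p : ℝ) ^ (-(((e - 1) / k : ℕ) : ℝ) - 1 / 2)
  else (p : ℝ) ^ (-(((e - 1) / k : ℕ) : ℝ) - 1)

/-- The multiplicative function `w_k`. -/
noncomputable def wk (k q : ℕ) : ℝ :=
  ∏ p ∈ q.primeFactors, wkLocal k p (q.factorization p)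

/-- The union `𝔎` of the arcs `𝔎(q,a) = {α ∈ [0,1) : |qα − a| ≤ P^{1−k}}` over coprime
`a, q` with `0 ≤ a ≤ q ≤ P`. -/
def Kset (k : ℕ) (P : ℝ) : Set ℝ :=
  {α ∈ Set.Ico (0 : ℝ) 1 | ∃ a q : ℕ, a ≤ q ∧ (q : ℝ) ≤ P ∧ Nat.Coprime a q ∧
    |(q : ℝ) * α - (a : ℝ)| ≤ P ^ ((1 : ℝ) - (k : ℝ))}

/-!
Let `s = ⌊k / 2⌋`. Since the Weyl sum `S` is at most `P` in absolute value, `|S| ^ (2 t)` may be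
replaced by the even moment `|S| ^ (2 s)`, and `Υ` by the sum of its arc weights over all fractions
`a / q` with `q ≤ P`, extended to the whole real line. After translating each weight to the origin,
the sum of `|S(β + a / q)| ^ (2 s)` over `a` modulo `q` is, by orthogonality, at most a multiple of
`P ^ (2 s) δ(q)`, where `δ(q)` is `q ^ (1 - 2 s)` times the number of solutions modulo `q` of
`x₁ ^ k + ⋯ + xₛ ^ k ≡ y₁ ^ k + ⋯ + yₛ ^ k`, and the weight integrates to a multiple of `P ^ (-k)`.

It remains to see that `∑ w_k(q) ^ (2 ω) δ(q)` converges. Its terms are multiplicative. Modulo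
`p ^ h`, the solutions having a unit coordinate contribute `O(1)` to `δ`, because a `k`-th power
equation in one unit has `O(k)` solutions; the others are divisible by `p`, and descend to
solutions modulo `p ^ (h - k)`, at the cost of a factor `p` when `h > 1` because `k ≤ 2 s + 1`.
Thus `δ(p ^ (e + 1)) ≪ p ^ ⌈e / k⌉`, which `w_k ^ (2 ω)` outweighs by `p ^ (-ω)`, and `ω > 1` makes
the Euler product converge.
-/

section

open Finset

/-! ### Power residues modulo prime powers -/

section PowerTorsion

variable {G : Type*} [CommGroup G] [Finite G]

lemma card_ker_powMonoidHom_le_index_mul (H : Subgroup G) [IsCyclic H] {k : ℕ} (hk : 0 < k) :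
    Nat.card (powMonoidHom k : G →* G).ker ≤ H.index * k := by
  set K := (powMonoidHom k : G →* G).ker
  have h_inter : Nat.card (H.subgroupOf K) ≤ k := by
    let toKer : H.subgroupOf K → (powMonoidHom k : H →* H).ker := fun x =>
      ⟨⟨x, x.2⟩, Subtype.ext x.1.2⟩
    have toKer_injective : Function.Injective toKer := fun x y hxy => by
      have h_coe : ((x : K) : G) = (y : K) :=
        congrArg (fun z : (powMonoidHom k : H →* H).ker => ((z : H) : G)) hxy
      exact Subtype.ext (Subtype.ext h_coe)
    calc Nat.card (H.subgroupOf K) ≤ Nat.card (powMonoidHom k : H →* H).ker :=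
          Nat.card_le_card_of_injective toKer toKer_injective
      _ = (Nat.card H).gcd k := IsCyclic.card_powMonoidHom_ker H k
      _ ≤ k := Nat.gcd_le_right _ hk
  have h_relIndex : (H.subgroupOf K).index ≤ H.index :=
    Nat.le_of_dvd (Nat.pos_of_ne_zero Subgroup.index_ne_zero_of_finite)
      (Subgroup.relIndex_dvd_index_of_normal H K)
  rw [← (H.subgroupOf K).card_mul_index, mul_comm]
  gcongr

lemma card_pow_eq_le_card_ker (k : ℕ) (b : G) :
    Nat.card {u : G // u ^ k = b} ≤ Nat.card (powMonoidHom k : G →* G).ker := by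
  rcases isEmpty_or_nonempty {u : G // u ^ k = b} with _ | ⟨⟨v, hv⟩⟩
  · simp
  · let toKer : {u : G // u ^ k = b} → (powMonoidHom k : G →* G).ker := fun u =>
      ⟨u / v, by simp [MonoidHom.mem_ker, div_pow, u.2, hv]⟩
    exact Nat.card_le_card_of_injective toKer fun u w huw => by
      simpa [toKer, Subtype.ext_iff] using huw

end PowerTorsion

lemma exists_isCyclic_index_le_two_units_zmod_prime_pow {p : ℕ} (hp : p.Prime) (h : ℕ) :
    ∃ H : Subgroup (ZMod (p ^ h))ˣ, IsCyclic H ∧ H.index ≤ 2 := by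
  have of_isCyclic (_ : IsCyclic (ZMod (p ^ h))ˣ) :
      ∃ H : Subgroup (ZMod (p ^ h))ˣ, IsCyclic H ∧ H.index ≤ 2 :=
    ⟨⊤, inferInstance, by simp⟩
  rcases eq_or_ne p 2 with rfl | hp2
  · rcases le_or_gt h 2 with hh | hh
    · exact of_isCyclic ((ZMod.isCyclic_units_two_pow_iff h).2 hh)
    · obtain ⟨n, rfl⟩ : ∃ n, h = n + 2 := ⟨h - 2, by omega⟩
      let five : (ZMod (2 ^ (n + 2)))ˣ :=
        ZMod.unitOfCoprime 5 (Nat.Coprime.pow_right _ (by norm_num))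
      have h_order : orderOf five = 2 ^ n := by
        rw [← orderOf_units, ZMod.coe_unitOfCoprime]
        exact_mod_cast ZMod.orderOf_five n
      refine ⟨Subgroup.zpowers five, inferInstance, ?_⟩
      have h_card : 2 ^ n * (Subgroup.zpowers five).index = 2 ^ n * 2 := by
        rw [← h_order, ← Nat.card_zpowers, Subgroup.card_mul_index, Nat.card_zpowers, h_order,
          Nat.card_eq_fintype_card, ZMod.card_units_eq_totient,
          Nat.totient_prime_pow_succ Nat.prime_two]
        ring
      exact (Nat.eq_of_mul_eq_mul_left (by positivity) h_card).le
  · exact of_isCyclic (ZMod.isCyclic_units_of_prime_pow p hp hp2 h)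

lemma card_units_zmod_prime_pow_pow_eq_le {p k : ℕ} (hp : p.Prime) (h : ℕ) (hk : 0 < k)
    (b : (ZMod (p ^ h))ˣ) : Nat.card {u : (ZMod (p ^ h))ˣ // u ^ k = b} ≤ 2 * k := by
  have : NeZero (p ^ h) := ⟨pow_ne_zero _ hp.ne_zero⟩
  obtain ⟨H, _, hH⟩ := exists_isCyclic_index_le_two_units_zmod_prime_pow hp h
  calc Nat.card {u : (ZMod (p ^ h))ˣ // u ^ k = b}
      ≤ Nat.card (powMonoidHom k : (ZMod (p ^ h))ˣ →* (ZMod (p ^ h))ˣ).ker :=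
        card_pow_eq_le_card_ker k b
    _ ≤ H.index * k := card_ker_powMonoidHom_le_index_mul H hk
    _ ≤ 2 * k := by gcongr

lemma card_isUnit_mul_pow_eq_le {p k : ℕ} (hp : p.Prime) (h : ℕ) (hk : 0 < k)
    {c : ZMod (p ^ h)} (hc : IsUnit c) (b : ZMod (p ^ h)) :
    Nat.card {z : ZMod (p ^ h) // IsUnit z ∧ c * z ^ k = b} ≤ 2 * k := by
  rcases isEmpty_or_nonempty {z : ZMod (p ^ h) // IsUnit z ∧ c * z ^ k = b} with _ | ⟨⟨v, hv, hvb⟩⟩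
  · simp
  · have : NeZero (p ^ h) := ⟨pow_ne_zero _ hp.ne_zero⟩
    let toUnit : {z : ZMod (p ^ h) // IsUnit z ∧ c * z ^ k = b} →
        {u : (ZMod (p ^ h))ˣ // u ^ k = hv.unit ^ k} := fun z =>
      ⟨z.2.1.unit, Units.ext (by simpa using hc.mul_left_cancel (z.2.2.trans hvb.symm))⟩
    have toUnit_injective : Function.Injective toUnit := fun z w hzw => by
      simpa [toUnit, Subtype.ext_iff, Units.ext_iff] using hzw
    exact (Nat.card_le_card_of_injective toUnit toUnit_injective).trans
      (card_units_zmod_prime_pow_pow_eq_le hp h hk _)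

/-! ### Diagonal congruences -/

section SolutionCount

variable {ι : Type*} [Fintype ι]

/-- The number of solutions of the diagonal congruence `∑ i, c i * x i ^ k ≡ 0 [MOD q]`, counted
over residue classes modulo `q`. -/
noncomputable def solutionCount (c : ι → ℤ) (k q : ℕ) : ℕ :=
  Nat.card {x : ι → ZMod q // ∑ i, (c i : ZMod q) * x i ^ k = 0}

variable (c : ι → ℤ) (k : ℕ)

lemma solutionCount_eq_card_filter (q : ℕ) [NeZero q] :
    solutionCount c k q =
      #{x : ι → ZMod q | ∑ i, (c i : ZMod q) * x i ^ k = 0} := by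
  rw [solutionCount, Nat.card_eq_fintype_card, Fintype.card_subtype]

lemma solutionCount_one : solutionCount c k 1 = 1 := by
  have : Unique {x : ι → ZMod 1 // ∑ i, (c i : ZMod 1) * x i ^ k = 0} :=
    ⟨⟨⟨0, Subsingleton.elim _ _⟩⟩, fun _ => Subsingleton.elim _ _⟩
  exact Nat.card_unique

lemma solutionCount_mul_of_coprime {m n : ℕ} (h : m.Coprime n) :
    solutionCount c k (m * n) = solutionCount c k m * solutionCount c k n := by
  let crt := ZMod.chineseRemainder h
  let splitResidues : (ι → ZMod (m * n)) ≃ (ι → ZMod m) × (ι → ZMod n) :=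
    (Equiv.arrowCongr (Equiv.refl ι) crt.toEquiv).trans (Equiv.arrowProdEquivProdArrow ι _ _)
  have sum_eq_zero_iff (x : ι → ZMod (m * n)) : ∑ i, (c i : ZMod (m * n)) * x i ^ k = 0 ↔
      ∑ i, (c i : ZMod m) * (splitResidues x).1 i ^ k = 0 ∧
        ∑ i, (c i : ZMod n) * (splitResidues x).2 i ^ k = 0 := by
    rw [← map_eq_zero_iff crt crt.injective, Prod.ext_iff]
    simp [splitResidues, map_sum, Prod.fst_sum, Prod.snd_sum]
  rw [solutionCount, solutionCount, solutionCount, ← Nat.card_prod]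
  exact Nat.card_congr
    ((splitResidues.subtypeEquiv sum_eq_zero_iff).trans Equiv.subtypeProdEquivProd)

lemma card_Ico_filter_intCast_eq (a : ℤ) (m q : ℕ) [NeZero q] (r : ZMod q) :
    #{x ∈ Ico a (a + m * q) | ((x : ℤ) : ZMod q) = r} = m := by
  have hq : (0 : ℤ) < q := by exact_mod_cast NeZero.pos q
  obtain ⟨v, rfl⟩ := ZMod.intCast_surjective r
  have h_count := Int.Ico_filter_modEq_card a (a + m * q) hq v
  have h_shift : (((a + m * q : ℤ) : ℚ) - v) / (q : ℤ) = (a - v) / (q : ℤ) + (m : ℤ) := by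
    have : (q : ℚ) ≠ 0 := by exact_mod_cast hq.ne'
    push_cast
    field_simp
    ring
  rw [h_shift, Int.ceil_add_intCast] at h_count
  simp only [ZMod.intCast_eq_intCast_iff]
  omega

lemma card_piFinset_filter_dvd_le [DecidableEq ι] (q m : ℕ) [NeZero q] {a : ℤ} {S : Finset ℤ}
    (hS : S ⊆ Ico a (a + m * q)) :
    #{x ∈ Fintype.piFinset fun _ : ι => S | (q : ℤ) ∣ ∑ i, c i * x i ^ k} ≤
      m ^ Fintype.card ι * solutionCount c k q := by
  rw [solutionCount_eq_card_filter]
  refine card_le_mul_card_image_of_maps_to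
    (f := fun (x : ι → ℤ) i => (x i : ZMod q)) (fun x hx => ?_) _ (fun y _ => ?_)
  · have hdvd := (ZMod.intCast_zmod_eq_zero_iff_dvd _ q).2 (mem_filter.1 hx).2
    push_cast at hdvd
    simpa using hdvd
  · have fiber_subset : {x ∈ {x ∈ Fintype.piFinset fun _ : ι => S |
          (q : ℤ) ∣ ∑ i, c i * x i ^ k} | (fun i => (x i : ZMod q)) = y} ⊆
        Fintype.piFinset fun i => {z ∈ Ico a (a + m * q) | ((z : ℤ) : ZMod q) = y i} := by
      intro x hx
      simp only [mem_filter, Fintype.mem_piFinset] at hx ⊢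
      exact fun i => ⟨hS (hx.1.1 i), congrFun hx.2 i⟩
    refine (card_le_card fiber_subset).trans ?_
    simp [Fintype.card_piFinset, card_Ico_filter_intCast_eq]

end SolutionCount

section PrimePower

variable {ι : Type*} [Fintype ι] (c : ι → ℤ) (k : ℕ) {p : ℕ} [Fact p.Prime]

lemma card_solutions_isUnit_apply_le (hk : 0 < k) (h : ℕ) {i : ι}
    (hi : IsUnit (c i : ZMod (p ^ h))) :
    #{x : ι → ZMod (p ^ h) | ∑ j, (c j : ZMod (p ^ h)) * x j ^ k = 0 ∧ IsUnit (x i)} ≤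
      2 * k * (p ^ h) ^ (Fintype.card ι - 1) := by
  let dropCoord (x : ι → ZMod (p ^ h)) (j : {j // j ≠ i}) : ZMod (p ^ h) := x j
  have card_target : #(univ : Finset ({j // j ≠ i} → ZMod (p ^ h))) =
      (p ^ h) ^ (Fintype.card ι - 1) := by
    simp [ZMod.card]
  rw [← card_target]
  refine card_le_mul_card_image_of_maps_to (f := dropCoord) (fun x _ => mem_univ _) _ fun y _ => ?_
  refine le_trans ?_ (card_isUnit_mul_pow_eq_le Fact.out h hk hi
    (-∑ j : {j // j ≠ i}, (c j : ZMod (p ^ h)) * y j ^ k))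
  rw [Nat.card_eq_fintype_card, Fintype.card_subtype]
  refine card_le_card_of_injOn (fun x => x i) (fun x hx => ?_) fun x hx z hz hxz => ?_
  · simp only [coe_filter, mem_filter, mem_univ, true_and, Set.mem_ofPred_eq] at hx ⊢
    obtain ⟨⟨h_sum, h_unit⟩, rfl⟩ := hx
    refine ⟨h_unit, eq_neg_of_add_eq_zero_left ?_⟩
    rw [← h_sum, Fintype.sum_eq_add_sum_subtype_ne _ i]
  · simp only [coe_filter, mem_filter, mem_univ, true_and, Set.mem_ofPred_eq] at hx hz
    funext j
    rcases eq_or_ne j i with rfl | hj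
    · exact hxz
    · exact congrFun (hx.2.trans hz.2.symm) ⟨j, hj⟩

lemma dvd_val_of_not_isUnit {h : ℕ} {z : ZMod (p ^ h)} (hz : ¬IsUnit z) : p ∣ z.val := by
  contrapose! hz
  rw [← ZMod.natCast_zmod_val z, ZMod.isUnit_iff_coprime]
  exact Nat.Coprime.pow_right h ((Nat.Prime.coprime_iff_not_dvd Fact.out).2 hz).symm

lemma pow_sub_dvd_sum_div_pow {h : ℕ} {x : ι → ZMod (p ^ h)}
    (hx : ∑ i, (c i : ZMod (p ^ h)) * x i ^ k = 0) (hp : ∀ i, p ∣ (x i).val) :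
    ((p ^ (h - k) : ℕ) : ℤ) ∣ ∑ i, c i * (((x i).val / p : ℕ) : ℤ) ^ k := by
  have h_factor : ∑ i, c i * ((x i).val : ℤ) ^ k =
      (p : ℤ) ^ k * ∑ i, c i * (((x i).val / p : ℕ) : ℤ) ^ k := by
    rw [mul_sum]
    refine sum_congr rfl fun i _ => ?_
    obtain ⟨y, hy⟩ := hp i
    rw [hy, Nat.mul_div_cancel_left _ (Nat.Prime.pos Fact.out)]
    push_cast
    ring
  have h_dvd : (p : ℤ) ^ h ∣ (p : ℤ) ^ k * ∑ i, c i * (((x i).val / p : ℕ) : ℤ) ^ k := by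
    rw [← h_factor]
    have := ZMod.intCast_zmod_eq_zero_iff_dvd (∑ i, c i * ((x i).val : ℤ) ^ k) (p ^ h)
    push_cast [ZMod.natCast_zmod_val] at this
    exact this.1 hx
  rw [Nat.cast_pow]
  rcases le_total h k with hhk | hkh
  · simp [Nat.sub_eq_zero_of_le hhk]
  · have h_pow : (p : ℤ) ^ h = p ^ k * p ^ (h - k) := by rw [← pow_add, Nat.add_sub_cancel' hkh]
    exact Int.dvd_of_mul_dvd_mul_left
      (pow_ne_zero k (by exact_mod_cast Nat.Prime.ne_zero Fact.out)) (h_pow ▸ h_dvd)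

lemma card_solutions_not_isUnit_le {h : ℕ} (hh : 0 < h) (hk : 0 < k) :
    #{x : ι → ZMod (p ^ h) | ∑ j, (c j : ZMod (p ^ h)) * x j ^ k = 0 ∧ ∀ i, ¬IsUnit (x i)} ≤
      (p ^ (min h k - 1)) ^ Fintype.card ι * solutionCount c k (p ^ (h - k)) := by
  have h_pow : p ^ h = p * (p ^ (min h k - 1) * p ^ (h - k)) := by
    rw [← pow_add, ← pow_succ']
    congr 1
    omega
  refine le_trans ?_ (card_piFinset_filter_dvd_le c k (p ^ (h - k)) (p ^ (min h k - 1)) (a := 0)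
    Subset.rfl)
  refine card_le_card_of_injOn (fun x i => (((x i).val / p : ℕ) : ℤ)) (fun x hx => ?_)
    fun x hx y hy hxy => ?_
  · simp only [coe_filter, mem_univ, true_and, Set.mem_ofPred_eq, Fintype.mem_piFinset,
      mem_Ico, zero_add] at hx ⊢
    refine ⟨fun i => ⟨Int.natCast_nonneg _, ?_⟩,
      pow_sub_dvd_sum_div_pow c k hx.1 fun i => dvd_val_of_not_isUnit (hx.2 i)⟩
    exact_mod_cast Nat.div_lt_of_lt_mul ((ZMod.val_lt (x i)).trans_eq h_pow)
  · simp only [coe_filter, mem_univ, true_and, Set.mem_ofPred_eq] at hx hy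
    funext i
    have h_div : (x i).val / p = (y i).val / p := Nat.cast_injective (congrFun hxy i)
    refine ZMod.val_injective _ ?_
    rw [← Nat.div_mul_cancel (dvd_val_of_not_isUnit (hx.2 i)), h_div,
      Nat.div_mul_cancel (dvd_val_of_not_isUnit (hy.2 i))]

lemma solutionCount_prime_pow_le (hk : 0 < k) {h : ℕ} (hh : 0 < h)
    (hc : ∀ i, IsUnit (c i : ZMod (p ^ h))) :
    solutionCount c k (p ^ h) ≤
      Fintype.card ι * (2 * k * (p ^ h) ^ (Fintype.card ι - 1)) +
        (p ^ (min h k - 1)) ^ Fintype.card ι * solutionCount c k (p ^ (h - k)) := by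
  rw [solutionCount_eq_card_filter]
  let unitSolutions (i : ι) : Finset (ι → ZMod (p ^ h)) :=
    {x | ∑ j, (c j : ZMod (p ^ h)) * x j ^ k = 0 ∧ IsUnit (x i)}
  let nonunitSolutions : Finset (ι → ZMod (p ^ h)) :=
    {x | ∑ j, (c j : ZMod (p ^ h)) * x j ^ k = 0 ∧ ∀ i, ¬IsUnit (x i)}
  have h_cover : ({x | ∑ i, (c i : ZMod (p ^ h)) * x i ^ k = 0} : Finset (ι → ZMod (p ^ h))) ⊆
      univ.biUnion unitSolutions ∪ nonunitSolutions := by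
    intro x hx
    simp only [unitSolutions, nonunitSolutions, mem_union, mem_biUnion, mem_filter, mem_univ,
      true_and] at hx ⊢
    by_cases h_unit : ∃ i, IsUnit (x i)
    · exact Or.inl (h_unit.imp fun i hi => ⟨hx, hi⟩)
    · exact Or.inr ⟨hx, not_exists.1 h_unit⟩
  refine (card_le_card h_cover).trans ((card_union_le _ _).trans ?_)
  gcongr
  · exact card_biUnion_le_card_mul _ _ _ fun i _ => card_solutions_isUnit_apply_le c k hk h (hc i)
  · exact card_solutions_not_isUnit_le c k hh hk

end PrimePower

-- Subtracting `A` on the right makes the induction close: since `p ≥ 2`, `A + p (X - A) ≤ p X - A`.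
lemma le_of_recurrence {δ : ℕ → ℝ} {A p : ℝ} {k : ℕ} (hk : 0 < k) (hA : 0 ≤ A) (hp : 2 ≤ p)
    (h_zero : δ 0 ≤ 1) (h_one : δ 1 ≤ A + 1) (h_step : ∀ h, 2 ≤ h → δ h ≤ A + p * δ (h - k))
    (h : ℕ) : δ h ≤ (2 * A + 1) * p ^ ((h - 1) ⌈/⌉ k) - A := by
  induction h using Nat.strong_induction_on with
  | _ h ih =>
  rcases Nat.lt_or_ge h 2 with h_lt | h_ge
  · interval_cases h <;> simp <;> linarith
  · have h_exp : (h - 1) ⌈/⌉ k = (h - k - 1) ⌈/⌉ k + 1 := by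
      rw [Nat.ceilDiv_eq_add_pred_div, Nat.ceilDiv_eq_add_pred_div]
      rcases le_or_gt k (h - 1) with h_le | h_gt
      · rw [show h - 1 + k - 1 = h - k - 1 + k - 1 + k by omega, Nat.add_div_right _ hk]
      · rw [show h - 1 + k - 1 = h - 2 + k by omega, Nat.add_div_right _ hk,
          Nat.div_eq_of_lt (by omega), Nat.div_eq_of_lt (by omega)]
    rw [h_exp, pow_succ]
    nlinarith [h_step h h_ge, ih (h - k) (by omega)]

section SolutionDensity

variable {ι : Type*} [Fintype ι] (c : ι → ℤ) (k : ℕ)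

/-- The ratio of `solutionCount c k q` to the value `q ^ (card ι - 1)` expected of a random
congruence modulo `q`. -/
noncomputable def solutionDensity (q : ℕ) : ℝ :=
  solutionCount c k q / (q : ℝ) ^ (Fintype.card ι - 1)

lemma solutionDensity_nonneg (q : ℕ) : 0 ≤ solutionDensity c k q := by
  unfold solutionDensity
  positivity

lemma solutionDensity_one : solutionDensity c k 1 = 1 := by
  simp [solutionDensity, solutionCount_one]

lemma solutionDensity_mul_of_coprime {m n : ℕ} (h : m.Coprime n) :
    solutionDensity c k (m * n) = solutionDensity c k m * solutionDensity c k n := by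
  simp only [solutionDensity, solutionCount_mul_of_coprime c k h, Nat.cast_mul, mul_pow,
    mul_div_mul_comm]

variable [Nonempty ι] {p : ℕ}

lemma solutionDensity_prime_pow_le (hp : p.Prime) (hk : 0 < k) {h : ℕ} (hh : 0 < h)
    (hc : ∀ i, IsUnit (c i : ZMod (p ^ h))) :
    solutionDensity c k (p ^ h) ≤ 2 * k * Fintype.card ι +
      (p : ℝ) ^ min h k / (p : ℝ) ^ Fintype.card ι * solutionDensity c k (p ^ (h - k)) := by
  have : Fact p.Prime := ⟨hp⟩
  have hp0 : (0 : ℝ) < p := by exact_mod_cast hp.pos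
  have h_count : (solutionCount c k (p ^ h) : ℝ) ≤
      Fintype.card ι * (2 * k * ((p : ℝ) ^ h) ^ (Fintype.card ι - 1)) +
        ((p : ℝ) ^ (min h k - 1)) ^ Fintype.card ι * solutionCount c k (p ^ (h - k)) := by
    exact_mod_cast solutionCount_prime_pow_le c k hk hh hc
  obtain ⟨n, hn⟩ := Nat.exists_eq_add_of_lt (Fintype.card_pos (α := ι))
  obtain ⟨m, hm⟩ : ∃ m, min h k = m + 1 := ⟨min h k - 1, by omega⟩
  have h_exp : ((p : ℝ) ^ (min h k - 1)) ^ Fintype.card ι * ((p : ℝ) ^ (h - k)) ^ n *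
      (p : ℝ) ^ Fintype.card ι = (p : ℝ) ^ min h k * ((p : ℝ) ^ h) ^ n := by
    have hh : h = h - k + (m + 1) := by omega
    generalize h - k = l at hh ⊢
    rw [hn, hm, hh]
    simp only [Nat.add_sub_cancel]
    ring
  simp only [hn, zero_add, Nat.add_sub_cancel] at h_count h_exp
  simp only [solutionDensity, hn, zero_add, Nat.add_sub_cancel, Nat.cast_pow]
  rw [div_le_iff₀ (by positivity)]
  refine h_count.trans_eq ?_
  field_simp
  linear_combination (solutionCount c k (p ^ (h - k)) : ℝ) * h_exp

lemma solutionDensity_prime_pow_succ_le (hp : p.Prime) (hk : 0 < k) (hkι : k ≤ Fintype.card ι + 1)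
    (hc : ∀ i, IsUnit (c i)) (e : ℕ) :
    solutionDensity c k (p ^ (e + 1)) ≤
      (2 * (2 * k * Fintype.card ι) + 1) * (p : ℝ) ^ (e ⌈/⌉ k) := by
  have hp1 : (1 : ℝ) ≤ p := by exact_mod_cast hp.one_le
  have h_units (h : ℕ) (i : ι) : IsUnit (c i : ZMod (p ^ h)) :=
    (hc i).map (Int.castRingHom (ZMod (p ^ h)))
  have h_le (h : ℕ) (hh : 0 < h) (r : ℕ) (hr : min h k ≤ Fintype.card ι + r) :
      solutionDensity c k (p ^ h) ≤
        2 * k * Fintype.card ι + (p : ℝ) ^ r * solutionDensity c k (p ^ (h - k)) := by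
    refine (solutionDensity_prime_pow_le c k hp hk hh (h_units h)).trans ?_
    gcongr
    · exact solutionDensity_nonneg ..
    · rw [div_le_iff₀ (by positivity), ← pow_add]
      exact pow_le_pow_right₀ hp1 (by omega)
  have h_one : solutionDensity c k (p ^ 1) ≤ 2 * k * Fintype.card ι + 1 := by
    have := h_le 1 one_pos 0 ((min_le_left _ _).trans Fintype.card_pos)
    simpa [Nat.sub_eq_zero_of_le hk, solutionDensity_one] using this
  have h_step (h : ℕ) (hh : 2 ≤ h) := h_le h (by omega) 1 ((min_le_right _ _).trans hkι)
  simp only [pow_one] at h_step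
  have := le_of_recurrence (δ := fun h => solutionDensity c k (p ^ h)) hk (by positivity)
    (by exact_mod_cast hp.two_le) (by simp [solutionDensity_one]) h_one h_step (e + 1)
  exact this.trans (sub_le_self _ (by positivity))

end SolutionDensity

/-! ### Convergence of the singular series -/

lemma summable_pow_div {r : ℝ} (hr : 0 ≤ r) (hr1 : r < 1) {k : ℕ} (hk : 0 < k) :
    Summable fun n : ℕ => r ^ (n / k) := by
  have : NeZero k := ⟨hk.ne'⟩
  have h_prod : Summable fun x : ℕ × Fin k => r ^ x.1 * 1 :=
    (summable_geometric_of_lt_one hr hr1).mul_of_nonneg (Summable.of_finite (f := fun _ => 1))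
      (fun n => pow_nonneg hr n) fun _ => zero_le_one
  simpa [Function.comp_def, Nat.divModEquiv] using
    (Nat.divModEquiv k).summable_iff.2 h_prod

section Multiplicative

variable {f b : ℕ → ℝ}

lemma sum_Ico_le_prod_tsum_prime_pow (hf : ∀ n, 0 ≤ f n) (h_one : f 1 = 1)
    (h_mul : ∀ {m n : ℕ}, m.Coprime n → f (m * n) = f m * f n)
    (h_summable : ∀ {p : ℕ}, p.Prime → Summable fun e => f (p ^ e)) (N : ℕ) :
    ∑ n ∈ Ico 1 N, f n ≤ ∏ p ∈ N.primesBelow, ∑' e, f (p ^ e) := by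
  have h_euler := (EulerProduct.summable_and_hasSum_smoothNumbers_prod_primesBelow_tsum h_one
    h_mul (fun hp => (h_summable hp).norm) N).2
  have h_smooth : ∀ n ∈ Ico 1 N, n ∈ N.smoothNumbers := fun n hn =>
    Nat.mem_smoothNumbers_of_lt (mem_Ico.1 hn).1 (mem_Ico.1 hn).2
  rw [← h_euler.tsum_eq, ← sum_subtype_of_mem f h_smooth]
  exact h_euler.summable.sum_le_tsum _ fun n _ => hf n

lemma summable_of_tsum_prime_pow_le (hf : ∀ n, 0 ≤ f n) (h_one : f 1 = 1)
    (h_mul : ∀ {m n : ℕ}, m.Coprime n → f (m * n) = f m * f n) (hb : ∀ n, 0 ≤ b n)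
    (hb_summable : Summable b) (h_summable : ∀ {p : ℕ}, p.Prime → Summable fun e => f (p ^ (e + 1)))
    (h_le : ∀ {p : ℕ}, p.Prime → ∑' e, f (p ^ (e + 1)) ≤ b p) :
    Summable f := by
  have h_summable' {p : ℕ} (hp : p.Prime) : Summable fun e => f (p ^ e) :=
    (summable_nat_add_iff 1).1 (h_summable hp)
  have h_factor {p : ℕ} (hp : p.Prime) : ∑' e, f (p ^ e) ≤ Real.exp (b p) := by
    rw [(h_summable' hp).tsum_eq_zero_add, pow_zero, h_one, add_comm]
    exact (add_le_add_left (h_le hp) 1).trans (Real.add_one_le_exp _)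
  refine (summable_nat_add_iff 1).1 (summable_of_sum_range_le (c := Real.exp (∑' n, b n))
    (fun n => hf _) fun N => ?_)
  calc ∑ n ∈ range N, f (n + 1) = ∑ n ∈ Ico 1 (N + 1), f n := by
        rw [range_eq_Ico, sum_Ico_add' f 0 N 1, zero_add]
    _ ≤ ∏ p ∈ (N + 1).primesBelow, ∑' e, f (p ^ e) :=
        sum_Ico_le_prod_tsum_prime_pow hf h_one h_mul h_summable' (N + 1)
    _ ≤ ∏ p ∈ (N + 1).primesBelow, Real.exp (b p) :=
        prod_le_prod (fun p _ => tsum_nonneg fun e => hf _) fun p hp =>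
          h_factor (Nat.prime_of_mem_primesBelow hp)
    _ = Real.exp (∑ p ∈ (N + 1).primesBelow, b p) := (Real.exp_sum _ _).symm
    _ ≤ Real.exp (∑' n, b n) := by
        gcongr
        exact hb_summable.sum_le_tsum _ fun n _ => hb n

end Multiplicative

section Weight

variable {k : ℕ}

lemma wkLocal_nonneg (k p e : ℕ) : 0 ≤ wkLocal k p e := by
  unfold wkLocal
  positivity

lemma wk_nonneg (k q : ℕ) : 0 ≤ wk k q :=
  prod_nonneg fun _ _ => wkLocal_nonneg ..

lemma wk_one (k : ℕ) : wk k 1 = 1 := by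
  simp [wk]

lemma wk_mul_of_coprime (k : ℕ) {m n : ℕ} (h : m.Coprime n) : wk k (m * n) = wk k m * wk k n := by
  unfold wk
  rw [h.primeFactors_mul, prod_union h.disjoint_primeFactors]
  congr 1 <;> refine prod_congr rfl fun p hp => ?_
  · rw [Nat.factorization_eq_of_coprime_left h (by simpa using hp)]
  · rw [Nat.factorization_eq_of_coprime_right h (by simpa using hp)]

lemma wk_prime_pow_succ (k : ℕ) {p : ℕ} (hp : p.Prime) (e : ℕ) :
    wk k (p ^ (e + 1)) = wkLocal k p (e + 1) := by
  simp [wk, Nat.primeFactors_prime_pow e.succ_ne_zero hp, hp.factorization_pow]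

lemma ceilDiv_eq_div_add_ite {k : ℕ} (hk : 0 < k) (e : ℕ) :
    e ⌈/⌉ k = e / k + if e % k = 0 then 0 else 1 := by
  have h_lt : k - 1 < k := Nat.sub_lt hk one_pos
  rw [Nat.ceilDiv_eq_add_pred_div, Nat.add_sub_assoc (Nat.one_le_of_lt hk), Nat.add_div hk,
    Nat.div_eq_of_lt h_lt, Nat.mod_eq_of_lt h_lt, add_zero]
  split_ifs <;> omega

-- `⌊e / k⌋ + ⌈e / k⌉` is `2u` or `2u + 1` according to whether `k ∣ e`, which merges the two cases
-- in the definition of `wkLocal`.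
lemma wkLocal_succ_le (hk : 0 < k) {p : ℕ} (hp : 0 < p) (e : ℕ) :
    wkLocal k p (e + 1) ≤ k * (p : ℝ) ^ (-((e / k : ℕ) + (e ⌈/⌉ k : ℕ) + 1 : ℝ) / 2) := by
  have hk1 : (1 : ℝ) ≤ k := by exact_mod_cast hk
  rw [wkLocal, Nat.add_sub_cancel, ceilDiv_eq_div_add_ite hk]
  split_ifs with he
  · refine le_of_eq ?_
    congr 2
    push_cast
    ring
  · refine le_trans (le_of_eq ?_) (le_mul_of_one_le_left (by positivity) hk1)
    congr 1
    push_cast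
    ring

lemma wkLocal_succ_rpow_mul_pow_le (hk : 0 < k) {p : ℕ} (hp : 2 ≤ p) {ω : ℝ} (hω : 1 ≤ ω) (e : ℕ) :
    wkLocal k p (e + 1) ^ (2 * ω) * (p : ℝ) ^ (e ⌈/⌉ k) ≤
      (k : ℝ) ^ (2 * ω) * (p : ℝ) ^ (-ω) * (1 / 2) ^ (e / k) := by
  have hp2 : (2 : ℝ) ≤ p := by exact_mod_cast hp
  have hp0 : (0 : ℝ) < p := by linarith
  set u := e / k
  set v := e ⌈/⌉ k
  calc wkLocal k p (e + 1) ^ (2 * ω) * (p : ℝ) ^ v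
      ≤ (k * (p : ℝ) ^ (-(u + v + 1 : ℝ) / 2)) ^ (2 * ω) * (p : ℝ) ^ v := by
        gcongr
        · exact wkLocal_nonneg ..
        · exact wkLocal_succ_le hk (by omega) e
    _ = (k : ℝ) ^ (2 * ω) * (p : ℝ) ^ (-ω * (u + v + 1) + v) := by
        rw [Real.mul_rpow (by positivity) (by positivity), ← Real.rpow_mul hp0.le,
          ← Real.rpow_natCast (p : ℝ) v, mul_assoc, ← Real.rpow_add hp0]
        ring_nf
    _ ≤ (k : ℝ) ^ (2 * ω) * (p : ℝ) ^ (-ω + -(u : ℝ)) := by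
        refine mul_le_mul_of_nonneg_left (Real.rpow_le_rpow_of_exponent_le (by linarith) ?_)
          (by positivity)
        nlinarith [(Nat.cast_nonneg u : (0 : ℝ) ≤ u), (Nat.cast_nonneg v : (0 : ℝ) ≤ v)]
    _ = (k : ℝ) ^ (2 * ω) * (p : ℝ) ^ (-ω) * (1 / p) ^ u := by
        rw [Real.rpow_add hp0, Real.rpow_neg hp0.le (u : ℝ), Real.rpow_natCast, one_div, inv_pow,
          mul_assoc]
    _ ≤ (k : ℝ) ^ (2 * ω) * (p : ℝ) ^ (-ω) * (1 / 2) ^ u := by gcongr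

end Weight

section SingularSeries

variable {ι : Type*} [Fintype ι] [Nonempty ι] {c : ι → ℤ} {k : ℕ} {ω : ℝ}

lemma summable_wk_rpow_mul_solutionDensity (hk : 0 < k) (hkι : k ≤ Fintype.card ι + 1)
    (hc : ∀ i, IsUnit (c i)) (hω : 1 < ω) :
    Summable fun q => wk k q ^ (2 * ω) * solutionDensity c k q := by
  set B : ℝ := 2 * (2 * k * Fintype.card ι) + 1
  have h_prime_pow {p : ℕ} (hp : p.Prime) (e : ℕ) :
      wk k (p ^ (e + 1)) ^ (2 * ω) * solutionDensity c k (p ^ (e + 1)) ≤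
        B * k ^ (2 * ω) * (p : ℝ) ^ (-ω) * (1 / 2) ^ (e / k) := by
    rw [wk_prime_pow_succ k hp]
    calc wkLocal k p (e + 1) ^ (2 * ω) * solutionDensity c k (p ^ (e + 1))
        ≤ wkLocal k p (e + 1) ^ (2 * ω) * (B * (p : ℝ) ^ (e ⌈/⌉ k)) := by
          gcongr
          · exact Real.rpow_nonneg (wkLocal_nonneg ..) _
          · exact solutionDensity_prime_pow_succ_le c k hp hk hkι hc e
      _ = B * (wkLocal k p (e + 1) ^ (2 * ω) * (p : ℝ) ^ (e ⌈/⌉ k)) := by ring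
      _ ≤ B * (k ^ (2 * ω) * (p : ℝ) ^ (-ω) * (1 / 2) ^ (e / k)) := by
          exact mul_le_mul_of_nonneg_left (wkLocal_succ_rpow_mul_pow_le hk hp.two_le hω.le e)
            (by positivity)
      _ = _ := by ring
  have h_half : Summable fun e : ℕ => (1 / 2 : ℝ) ^ (e / k) :=
    summable_pow_div (by norm_num) (by norm_num) hk
  have h_nonneg (q : ℕ) : 0 ≤ wk k q ^ (2 * ω) * solutionDensity c k q :=
    mul_nonneg (Real.rpow_nonneg (wk_nonneg k q) _) (solutionDensity_nonneg c k q)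
  have h_summable {p : ℕ} (hp : p.Prime) : Summable fun e =>
      wk k (p ^ (e + 1)) ^ (2 * ω) * solutionDensity c k (p ^ (e + 1)) :=
    .of_nonneg_of_le (fun e => h_nonneg _) (h_prime_pow hp) (h_half.mul_left _)
  refine summable_of_tsum_prime_pow_le h_nonneg (by simp [wk_one, solutionDensity_one])
    (fun h => ?_) (fun n => by positivity)
    ((Real.summable_nat_rpow.2 (neg_lt_neg hω)).mul_left
      (B * k ^ (2 * ω) * ∑' e : ℕ, (1 / 2 : ℝ) ^ (e / k))) h_summable fun {p} hp => ?_
  · rw [wk_mul_of_coprime k h, solutionDensity_mul_of_coprime c k h,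
      Real.mul_rpow (wk_nonneg ..) (wk_nonneg ..), mul_mul_mul_comm]
  · refine ((h_summable hp).tsum_le_tsum (h_prime_pow hp) (h_half.mul_left _)).trans_eq ?_
    rw [tsum_mul_left]
    ring

end SingularSeries

/-! ### Moments of exponential sums -/

section ExponentialSum

lemma eC_add (a b : ℝ) : eC (a + b) = eC a * eC b := by
  simp only [eC, Complex.ofReal_add, mul_add, Complex.exp_add]

lemma eC_sum {ι : Type*} (s : Finset ι) (f : ι → ℝ) : eC (∑ i ∈ s, f i) = ∏ i ∈ s, eC (f i) := by
  simp only [eC, Complex.ofReal_sum, mul_sum, Complex.exp_sum]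

lemma eC_natCast_mul (n : ℕ) (a : ℝ) : eC (n * a) = eC a ^ n := by
  rw [eC, eC, ← Complex.exp_nat_mul]
  push_cast
  ring_nf

lemma norm_eC (a : ℝ) : ‖eC a‖ = 1 := by
  rw [eC, mul_right_comm]
  exact_mod_cast Complex.norm_exp_ofReal_mul_I (2 * Real.pi * a)

lemma conj_eC (a : ℝ) : starRingEnd ℂ (eC a) = eC (-a) := by
  simp [eC, ← Complex.exp_conj, Complex.conj_ofNat]

lemma continuous_eC : Continuous eC := by
  unfold eC
  fun_prop

lemma eC_eq_one_iff {a : ℝ} : eC a = 1 ↔ ∃ n : ℤ, a = n := by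
  rw [eC, Complex.exp_eq_one_iff]
  refine exists_congr fun n => ?_
  rw [mul_comm (n : ℂ), mul_right_inj' Complex.two_pi_I_ne_zero]
  norm_cast

lemma sum_range_mul_eC_div_mul (m : ℕ) {q : ℕ} (hq : 0 < q) (h : ℤ) :
    ∑ a ∈ range (m * q), eC ((a : ℝ) / q * h) = if (q : ℤ) ∣ h then (m * q : ℂ) else 0 := by
  have hq0 : (q : ℝ) ≠ 0 := by positivity
  have h_geom (a : ℕ) : eC ((a : ℝ) / q * h) = eC (h / q) ^ a := by
    rw [← eC_natCast_mul, div_mul_comm, mul_comm]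
  have h_root : eC ((h : ℝ) / q) = 1 ↔ (q : ℤ) ∣ h := by
    rw [eC_eq_one_iff, dvd_iff_exists_eq_mul_left]
    refine exists_congr fun n => ?_
    rw [div_eq_iff hq0]
    norm_cast
  simp only [h_geom]
  split_ifs with hd
  · simp [h_root.2 hd]
  · have h_period : eC ((h : ℝ) / q) ^ (m * q) = 1 := by
      rw [← eC_natCast_mul, eC_eq_one_iff]
      refine ⟨m * h, ?_⟩
      push_cast
      field_simp
    rw [geom_sum_eq (mt h_root.1 hd), h_period, sub_self, zero_div]

/-- The exponential sum `∑ x ∈ A, e(α x ^ k)`. -/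
noncomputable def weylSum (A : Finset ℤ) (k : ℕ) (α : ℝ) : ℂ := ∑ x ∈ A, eC (α * (x : ℝ) ^ k)

variable (A : Finset ℤ) (k : ℕ)

lemma norm_weylSum_le (α : ℝ) : ‖weylSum A k α‖ ≤ #A :=
  (norm_sum_le ..).trans_eq (by simp [norm_eC])

lemma continuous_weylSum : Continuous (weylSum A k) :=
  continuous_finsetSum A fun _ _ => continuous_eC.comp (by fun_prop)

/-- The coefficients of `x₁ ^ k + ⋯ + xₛ ^ k = y₁ ^ k + ⋯ + yₛ ^ k`, written with all terms on one
side: this is the equation underlying the `2 s`-th moment of `weylSum`. -/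
def momentSign (s : ℕ) : Fin s ⊕ Fin s → ℤ := Sum.elim 1 (-1)

lemma isUnit_momentSign (s : ℕ) (i : Fin s ⊕ Fin s) : IsUnit (momentSign s i) := by
  cases i <;> simp [momentSign]

lemma norm_weylSum_pow_eq_sum (s : ℕ) (α : ℝ) :
    ((‖weylSum A k α‖ ^ (2 * s) : ℝ) : ℂ) =
      ∑ x ∈ Fintype.piFinset fun _ : Fin s ⊕ Fin s => A,
        eC (α * (∑ i, momentSign s i * x i ^ k : ℤ)) := by
  have h_conj : starRingEnd ℂ (weylSum A k α) = ∑ x ∈ A, eC (α * ((-1 : ℤ) * (x : ℝ) ^ k)) := by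
    simp [weylSum, conj_eC]
  calc ((‖weylSum A k α‖ ^ (2 * s) : ℝ) : ℂ)
      = weylSum A k α ^ s * starRingEnd ℂ (weylSum A k α) ^ s := by
        rw [← mul_pow, Complex.mul_conj', pow_mul]
        push_cast
        rfl
    _ = ∏ i, ∑ x ∈ A, eC (α * (momentSign s i * (x : ℝ) ^ k)) := by
        rw [h_conj, Fintype.prod_sum_type]
        simp [momentSign, weylSum]
    _ = ∑ x ∈ Fintype.piFinset fun _ : Fin s ⊕ Fin s => A,
          ∏ i, eC (α * (momentSign s i * (x i : ℝ) ^ k)) := prod_univ_sum ..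
    _ = _ := by
        push_cast
        simp only [← eC_sum, mul_sum]

lemma sum_range_norm_weylSum_pow_le (s m : ℕ) {q : ℕ} (hq : 0 < q) (β : ℝ) :
    ∑ a ∈ range (m * q), ‖weylSum A k (β + a / q)‖ ^ (2 * s) ≤
      m * q * #{x ∈ Fintype.piFinset fun _ : Fin s ⊕ Fin s => A |
        (q : ℤ) ∣ ∑ i, momentSign s i * x i ^ k} := by
  set X := Fintype.piFinset fun _ : Fin s ⊕ Fin s => A
  let H (x : Fin s ⊕ Fin s → ℤ) : ℤ := ∑ i, momentSign s i * x i ^ k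
  have h_expand : ((∑ a ∈ range (m * q), ‖weylSum A k (β + a / q)‖ ^ (2 * s) : ℝ) : ℂ) =
      ∑ x ∈ X, eC (β * H x) * ∑ a ∈ range (m * q), eC ((a : ℝ) / q * H x) := by
    simp only [Complex.ofReal_sum, norm_weylSum_pow_eq_sum, mul_sum, ← eC_add, ← add_mul]
    exact sum_comm
  rw [← Complex.norm_of_nonneg (sum_nonneg fun a _ => by positivity), h_expand]
  calc ‖∑ x ∈ X, eC (β * H x) * ∑ a ∈ range (m * q), eC ((a : ℝ) / q * H x)‖
      ≤ ∑ x ∈ X, ‖eC (β * H x) * ∑ a ∈ range (m * q), eC ((a : ℝ) / q * H x)‖ := norm_sum_le ..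
    _ = ∑ x ∈ X, if (q : ℤ) ∣ H x then (m * q : ℝ) else 0 := by
        refine sum_congr rfl fun x _ => ?_
        rw [norm_mul, norm_eC, one_mul, sum_range_mul_eC_div_mul m hq]
        split_ifs <;> simp
    _ = m * q * #{x ∈ X | (q : ℤ) ∣ H x} := by
        rw [← sum_filter, sum_const, nsmul_eq_mul, mul_comm]

lemma sum_range_norm_weylSum_pow_le_solutionDensity {s : ℕ} (hs : 0 < s) (m n : ℕ) {q : ℕ}
    (hq : 0 < q) {b : ℤ} (hA : A ⊆ Ico b (b + n * q)) (β : ℝ) :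
    ∑ a ∈ range (m * q), ‖weylSum A k (β + a / q)‖ ^ (2 * s) ≤
      m * (n * q : ℝ) ^ (2 * s) * solutionDensity (momentSign s) k q := by
  have : NeZero q := ⟨hq.ne'⟩
  have h_count : (#{x ∈ Fintype.piFinset fun _ : Fin s ⊕ Fin s => A |
      (q : ℤ) ∣ ∑ i, momentSign s i * x i ^ k} : ℝ) ≤
        n ^ (2 * s) * solutionCount (momentSign s) k q := by
    have := card_piFinset_filter_dvd_le (momentSign s) k q n hA
    simp only [Fintype.card_sum, Fintype.card_fin, ← two_mul] at this
    exact_mod_cast this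
  refine (sum_range_norm_weylSum_pow_le A k s m hq β).trans ?_
  calc _ ≤ m * q * (n ^ (2 * s) * solutionCount (momentSign s) k q : ℝ) := by gcongr
    _ = _ := by
      obtain ⟨l, hl⟩ : ∃ l, 2 * s = l + 1 := ⟨2 * s - 1, by omega⟩
      simp only [solutionDensity, Fintype.card_sum, Fintype.card_fin, ← two_mul, hl,
        Nat.add_sub_cancel]
      field_simp
      ring

end ExponentialSum

/-! ### Summation over the arcs -/

section Translates

variable {G ι : Type*} [AddCommGroup G] [MeasurableSpace G] [MeasurableAdd G] {μ : Measure G}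
  [μ.IsAddRightInvariant] {φ F : G → ℝ} {M : ℝ}

lemma integrable_translate_mul (hφ : Integrable φ μ) (hF : AEStronglyMeasurable F μ)
    (hM : ∀ x, ‖F x‖ ≤ M) (a : G) : Integrable (fun x => φ (x - a) * F x) μ :=
  (hφ.comp_sub_right a).mul_bdd hF (Filter.Eventually.of_forall hM)

lemma integral_sum_translate_mul_le (s : Finset ι) (c : ι → G) {B : ℝ} (hφ : Integrable φ μ)
    (hφ0 : ∀ x, 0 ≤ φ x) (hF : AEStronglyMeasurable F μ) (hM : ∀ x, ‖F x‖ ≤ M)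
    (hB : ∀ x, ∑ i ∈ s, F (x + c i) ≤ B) :
    ∫ x, ∑ i ∈ s, φ (x - c i) * F x ∂μ ≤ B * ∫ x, φ x ∂μ := by
  have h_integrable (i : ι) := integrable_translate_mul hφ hF hM (c i)
  have h_integrable_add (i : ι) : Integrable (fun x => φ x * F (x + c i)) μ := by
    simpa using (h_integrable i).comp_add_right (c i)
  have h_translate (i : ι) : ∫ x, φ (x - c i) * F x ∂μ = ∫ x, φ x * F (x + c i) ∂μ := by
    simpa using (integral_sub_right_eq_self (fun x => φ x * F (x + c i)) (c i))
  calc ∫ x, ∑ i ∈ s, φ (x - c i) * F x ∂μ = ∫ x, ∑ i ∈ s, φ x * F (x + c i) ∂μ := by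
        rw [integral_finsetSum _ fun i _ => h_integrable i,
          integral_finsetSum _ fun i _ => h_integrable_add i]
        exact sum_congr rfl fun i _ => h_translate i
    _ ≤ ∫ x, B * φ x ∂μ := by
        refine integral_mono (integrable_finsetSum _ fun i _ => h_integrable_add i)
          (hφ.const_mul B) fun x => ?_
        simp only [← mul_sum, mul_comm B]
        exact mul_le_mul_of_nonneg_left (hB x) (hφ0 x)
    _ = B * ∫ x, φ x ∂μ := integral_const_mul ..

end Translates

section Kernel

variable {ω c : ℝ}

lemma integrable_one_add_mul_abs_rpow_neg (hω : 1 < ω) (hc : 0 < c) :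
    Integrable fun x : ℝ => (1 + c * |x|) ^ (-ω) := by
  have h_integrable : Integrable fun x : ℝ => (1 + ‖x‖) ^ (-ω) :=
    integrable_one_add_norm (by simpa using hω)
  simpa [abs_mul, abs_of_pos hc] using h_integrable.comp_mul_left' hc.ne'

lemma integral_one_add_mul_abs_rpow_neg (ω : ℝ) (hc : 0 < c) :
    ∫ x : ℝ, (1 + c * |x|) ^ (-ω) = c⁻¹ * ∫ x : ℝ, (1 + |x|) ^ (-ω) := by
  simpa [abs_mul, abs_of_pos hc] using
    Measure.integral_comp_mul_left (fun x : ℝ => (1 + |x|) ^ (-ω)) c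

end Kernel

section Arcs

variable {k : ℕ} {ω P : ℝ}

lemma measurableSet_Kset (k : ℕ) (P : ℝ) : MeasurableSet (Kset k P) := by
  simp only [Kset, measurableSet_setOfPred]
  measurability

/-- The majorant `w_k(q) ^ {2ω} (1 + P ^ k |α - a / q|) ^ {-ω}` attached to the arc `𝔎(q, a)`, as a
function on the whole real line. -/
noncomputable def arcWeight (k : ℕ) (ω P : ℝ) (a q : ℕ) (α : ℝ) : ℝ :=
  wk k q ^ (2 * ω) * (1 + P ^ k * |α - a / q|) ^ (-ω)

/-- The sum of `arcWeight` over all fractions `a / q` with `1 ≤ q ≤ P`. The numerators run over two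
complete periods, so as to include `a = q`. -/
noncomputable def arcMajorant (k : ℕ) (ω P α : ℝ) : ℝ :=
  ∑ q ∈ Icc 1 ⌊P⌋₊, ∑ a ∈ range (2 * q), arcWeight k ω P a q α

lemma arcWeight_nonneg (hP : 0 ≤ P) (a q : ℕ) (α : ℝ) : 0 ≤ arcWeight k ω P a q α :=
  mul_nonneg (Real.rpow_nonneg (wk_nonneg k q) _) (by positivity)

lemma arcMajorant_nonneg (hP : 0 ≤ P) (α : ℝ) : 0 ≤ arcMajorant k ω P α :=
  sum_nonneg fun _ _ => sum_nonneg fun _ _ => arcWeight_nonneg hP ..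

lemma arcWeight_le_arcMajorant (hP : 0 ≤ P) {a q : ℕ} (hq : 0 < q) (haq : a ≤ q)
    (hqP : (q : ℝ) ≤ P) (α : ℝ) : arcWeight k ω P a q α ≤ arcMajorant k ω P α :=
  calc arcWeight k ω P a q α ≤ ∑ a ∈ range (2 * q), arcWeight k ω P a q α :=
        single_le_sum (f := fun a => arcWeight k ω P a q α) (fun _ _ => arcWeight_nonneg hP ..)
          (mem_range.2 (by omega))
    _ ≤ arcMajorant k ω P α :=
        single_le_sum (f := fun q => ∑ a ∈ range (2 * q), arcWeight k ω P a q α)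
          (fun _ _ => sum_nonneg fun _ _ => arcWeight_nonneg hP ..)
          (mem_Icc.2 ⟨hq, Nat.le_floor hqP⟩)

variable {s : ℕ} {A : Finset ℤ}

lemma continuous_norm_weylSum_pow (A : Finset ℤ) (k n : ℕ) :
    Continuous fun α => ‖weylSum A k α‖ ^ n :=
  (continuous_weylSum A k).norm.pow n

lemma norm_norm_weylSum_pow_le (A : Finset ℤ) (k n : ℕ) (α : ℝ) :
    ‖‖weylSum A k α‖ ^ n‖ ≤ (#A : ℝ) ^ n := by
  rw [norm_pow, norm_norm]
  gcongr
  exact norm_weylSum_le A k α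

lemma integrable_arcWeight_mul_norm_weylSum_pow (hω : 1 < ω) (hP : 0 < P) (s : ℕ) (A : Finset ℤ)
    (a q : ℕ) : Integrable fun α => arcWeight k ω P a q α * ‖weylSum A k α‖ ^ (2 * s) := by
  simp only [arcWeight, mul_assoc]
  exact (integrable_translate_mul (integrable_one_add_mul_abs_rpow_neg hω (pow_pos hP k))
    (continuous_norm_weylSum_pow A k _).aestronglyMeasurable (norm_norm_weylSum_pow_le A k _)
    _).const_mul _

lemma sum_range_norm_weylSum_pow_le_of_subset_Icc_floor (hP : 0 ≤ P) (hs : 0 < s)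
    (hA : A ⊆ Icc 1 ⌊P⌋) {q : ℕ} (hq : 0 < q) (hqP : (q : ℝ) ≤ P) (β : ℝ) :
    ∑ a ∈ range (2 * q), ‖weylSum A k (β + a / q)‖ ^ (2 * s) ≤
      2 * (2 * P) ^ (2 * s) * solutionDensity (momentSign s) k q := by
  set n := ⌊P⌋₊ / q + 1
  have hA' : A ⊆ Ico 1 (1 + n * q) := fun x hx => by
    have h_lt : ⌊P⌋₊ < n * q := by
      rw [add_mul, one_mul]
      exact Nat.lt_div_mul_add hq
    have hx := mem_Icc.1 (hA hx)
    rw [← Int.natCast_floor_eq_floor hP] at hx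
    rw [mem_Ico]
    zify at h_lt
    omega
  have h_length : (n * q : ℝ) ≤ 2 * P := by
    have h_div : ((⌊P⌋₊ / q : ℕ) : ℝ) * q ≤ ⌊P⌋₊ := by exact_mod_cast Nat.div_mul_le_self _ _
    have h_floor := Nat.floor_le hP
    push_cast [n]
    linarith
  refine (sum_range_norm_weylSum_pow_le_solutionDensity A k hs 2 n hq hA' β).trans ?_
  gcongr
  · exact solutionDensity_nonneg ..
  · norm_num

lemma integral_sum_arcWeight_mul_norm_weylSum_pow_le (hω : 1 < ω) (hP : 0 < P) (hs : 0 < s)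
    (hA : A ⊆ Icc 1 ⌊P⌋) {q : ℕ} (hq : 0 < q) (hqP : (q : ℝ) ≤ P) :
    ∫ α, ∑ a ∈ range (2 * q), arcWeight k ω P a q α * ‖weylSum A k α‖ ^ (2 * s) ≤
      2 * (2 * P) ^ (2 * s) * ((P ^ k)⁻¹ * ∫ x : ℝ, (1 + |x|) ^ (-ω)) *
        (wk k q ^ (2 * ω) * solutionDensity (momentSign s) k q) := by
  calc ∫ α, ∑ a ∈ range (2 * q), arcWeight k ω P a q α * ‖weylSum A k α‖ ^ (2 * s)
      = wk k q ^ (2 * ω) * ∫ α : ℝ, ∑ a ∈ range (2 * q),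
          (1 + P ^ k * |α - a / q|) ^ (-ω) * ‖weylSum A k α‖ ^ (2 * s) := by
        simp only [arcWeight, mul_assoc, ← mul_sum, integral_const_mul]
    _ ≤ wk k q ^ (2 * ω) * (2 * (2 * P) ^ (2 * s) * solutionDensity (momentSign s) k q *
          ∫ x : ℝ, (1 + P ^ k * |x|) ^ (-ω)) := by
        refine mul_le_mul_of_nonneg_left ?_ (Real.rpow_nonneg (wk_nonneg k q) _)
        exact integral_sum_translate_mul_le (range (2 * q)) (fun a : ℕ => (a / q : ℝ))
          (integrable_one_add_mul_abs_rpow_neg hω (pow_pos hP k)) (fun x => by positivity)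
          (continuous_norm_weylSum_pow A k _).aestronglyMeasurable
          (norm_norm_weylSum_pow_le A k _)
          (sum_range_norm_weylSum_pow_le_of_subset_Icc_floor hP.le hs hA hq hqP)
    _ = _ := by
        rw [integral_one_add_mul_abs_rpow_neg ω (pow_pos hP k)]
        ring

lemma integral_arcMajorant_mul_norm_weylSum_pow_le (hk : 0 < k) (hks : k ≤ 2 * s + 1)
    (hs : 0 < s) (hω : 1 < ω) (hP : 0 < P) (hA : A ⊆ Icc 1 ⌊P⌋) :
    ∫ α, arcMajorant k ω P α * ‖weylSum A k α‖ ^ (2 * s) ≤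
      2 * (2 * P) ^ (2 * s) * ((P ^ k)⁻¹ * ∫ x : ℝ, (1 + |x|) ^ (-ω)) *
        ∑' q, wk k q ^ (2 * ω) * solutionDensity (momentSign s) k q := by
  have : Nonempty (Fin s ⊕ Fin s) := ⟨.inl ⟨0, hs⟩⟩
  have h_summable : Summable fun q => wk k q ^ (2 * ω) * solutionDensity (momentSign s) k q :=
    summable_wk_rpow_mul_solutionDensity hk (by simpa [← two_mul] using hks)
      (isUnit_momentSign s) hω
  simp only [arcMajorant, sum_mul]
  rw [integral_finsetSum _ fun q _ => integrable_finsetSum _ fun a _ =>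
    integrable_arcWeight_mul_norm_weylSum_pow hω hP s A a q]
  refine (sum_le_sum fun q hq => integral_sum_arcWeight_mul_norm_weylSum_pow_le hω hP hs hA
    (mem_Icc.1 hq).1 ((Nat.le_floor_iff hP.le).1 (mem_Icc.1 hq).2)).trans ?_
  rw [← mul_sum]
  gcongr
  exact h_summable.sum_le_tsum _ fun q _ =>
    mul_nonneg (Real.rpow_nonneg (wk_nonneg k q) _) (solutionDensity_nonneg ..)

lemma integrable_arcMajorant_mul_norm_weylSum_pow (hω : 1 < ω) (hP : 0 < P) (s : ℕ)
    (A : Finset ℤ) : Integrable fun α => arcMajorant k ω P α * ‖weylSum A k α‖ ^ (2 * s) := by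
  simp only [arcMajorant, sum_mul]
  exact integrable_finsetSum _ fun q _ => integrable_finsetSum _ fun a _ =>
    integrable_arcWeight_mul_norm_weylSum_pow hω hP s A a q

end Arcs

section Moments

variable {k : ℕ} {ω P t : ℝ} {A : Finset ℤ}

lemma norm_weylSum_le_of_subset_Icc_floor (hP : 0 ≤ P) (hA : A ⊆ Icc 1 ⌊P⌋) (k : ℕ) (α : ℝ) :
    ‖weylSum A k α‖ ≤ P := by
  have h_card : #A ≤ ⌊P⌋₊ := by
    simpa [← Int.natCast_floor_eq_floor hP] using card_le_card hA
  calc ‖weylSum A k α‖ ≤ #A := norm_weylSum_le A k α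
    _ ≤ ⌊P⌋₊ := by exact_mod_cast h_card
    _ ≤ P := Nat.floor_le hP

lemma rpow_two_mul_le_rpow_mul_pow {x : ℝ} (hx : 0 ≤ x) (hxP : x ≤ P) {s : ℕ} (hst : s ≤ t) :
    x ^ (2 * t) ≤ P ^ (2 * t - 2 * s) * x ^ (2 * s) := by
  have h_sub : 0 ≤ 2 * t - 2 * s := by linarith
  calc x ^ (2 * t) = x ^ (2 * t - 2 * s + (2 * s : ℕ)) := by
        push_cast
        ring_nf
    _ = x ^ (2 * t - 2 * s) * x ^ (2 * s) := by
        rw [Real.rpow_add_of_nonneg hx h_sub (Nat.cast_nonneg _), Real.rpow_natCast]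
    _ ≤ P ^ (2 * t - 2 * s) * x ^ (2 * s) := by gcongr

lemma setIntegral_Kset_le (hω : 1 < ω) (hP : 0 < P) (hA : A ⊆ Icc 1 ⌊P⌋) {s : ℕ} (hst : s ≤ t)
    {Υ : ℝ → ℝ}
    (hΥ : ∀ α ∈ Kset k P, ∃ a q : ℕ, a ≤ q ∧ (q : ℝ) ≤ P ∧ Nat.Coprime a q ∧
      Υ α = arcWeight k ω P a q α) :
    ∫ α in Kset k P, Υ α * ‖weylSum A k α‖ ^ (2 * t) ≤
      P ^ (2 * t - 2 * s) * ∫ α, arcMajorant k ω P α * ‖weylSum A k α‖ ^ (2 * s) := by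
  set g : ℝ → ℝ :=
    fun α => P ^ (2 * t - 2 * s) * (arcMajorant k ω P α * ‖weylSum A k α‖ ^ (2 * s))
  have hg : Integrable g := (integrable_arcMajorant_mul_norm_weylSum_pow hω hP s A).const_mul _
  have hg0 (α : ℝ) : 0 ≤ g α := by
    have := arcMajorant_nonneg (k := k) (ω := ω) hP.le α
    positivity
  have hΥ_bounds (α : ℝ) (hα : α ∈ Kset k P) : 0 ≤ Υ α ∧ Υ α ≤ arcMajorant k ω P α := by
    obtain ⟨a, q, haq, hqP, hcop, hΥα⟩ := hΥ α hα
    have hq : 0 < q := Nat.pos_of_ne_zero fun hq => by simp_all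
    exact hΥα ▸ ⟨arcWeight_nonneg hP.le a q α, arcWeight_le_arcMajorant hP.le hq haq hqP α⟩
  have h_le_g (α : ℝ) (hα : α ∈ Kset k P) : Υ α * ‖weylSum A k α‖ ^ (2 * t) ≤ g α :=
    calc Υ α * ‖weylSum A k α‖ ^ (2 * t)
        ≤ arcMajorant k ω P α * (P ^ (2 * t - 2 * s) * ‖weylSum A k α‖ ^ (2 * s)) :=
          mul_le_mul (hΥ_bounds α hα).2
            (rpow_two_mul_le_rpow_mul_pow (norm_nonneg _)
              (norm_weylSum_le_of_subset_Icc_floor hP.le hA k α) hst)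
            (by positivity) (arcMajorant_nonneg hP.le α)
      _ = g α := mul_left_comm ..
  calc ∫ α in Kset k P, Υ α * ‖weylSum A k α‖ ^ (2 * t) ≤ ∫ α in Kset k P, g α := by
        refine integral_mono_of_nonneg ?_ hg.integrableOn ?_ <;>
          filter_upwards [ae_restrict_mem (measurableSet_Kset k P)] with α hα
        · exact mul_nonneg (hΥ_bounds α hα).1 (by positivity)
        · exact h_le_g α hα
    _ ≤ ∫ α, g α := setIntegral_le_integral hg (Filter.Eventually.of_forall hg0)
    _ = _ := integral_const_mul ..

lemma rpow_sub_mul_two_mul_pow_mul_inv_pow (hP : 0 < P) (k s : ℕ) (t : ℝ) :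
    P ^ (2 * t - 2 * s) * ((2 * P) ^ (2 * s) * (P ^ k)⁻¹) = 2 ^ (2 * s) * P ^ (2 * t - k) := by
  have h_exp : P ^ (2 * t - k) = P ^ (2 * t - 2 * s) * P ^ (2 * s) * (P ^ k)⁻¹ := by
    rw [← Real.rpow_natCast P (2 * s), ← Real.rpow_natCast P k, ← Real.rpow_neg hP.le,
      ← Real.rpow_add hP, ← Real.rpow_add hP]
    push_cast
    ring_nf
  rw [h_exp, mul_pow]
  ring

end Moments

end

theorem stmt16_general (k : ℕ) (hk : 2 ≤ k) (ω : ℝ) (hω : 1 < ω) (t : ℝ)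
    (ht : ((k / 2 : ℕ) : ℝ) ≤ t) :
    ∃ C > (0 : ℝ), ∀ P : ℝ, 0 < P → ∀ 𝒜 : Finset ℤ, 𝒜 ⊆ Finset.Icc 1 ⌊P⌋ →
      ∀ Υ : ℝ → ℝ,
        (∀ α ∈ Kset k P, ∃ a q : ℕ, a ≤ q ∧ (q : ℝ) ≤ P ∧ Nat.Coprime a q ∧
          Υ α = wk k q ^ (2 * ω) * (1 + P ^ (k : ℕ) * |α - (a : ℝ) / (q : ℝ)|) ^ (-ω)) →
        (∫ α in Kset k P, Υ α * ‖∑ x ∈ 𝒜, eC (α * (x : ℝ) ^ k)‖ ^ (2 * t))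
          ≤ C * P ^ (2 * t - (k : ℝ)) := by
  set s := k / 2
  set I := ∫ x : ℝ, (1 + |x|) ^ (-ω)
  set T := ∑' q, wk k q ^ (2 * ω) * solutionDensity (momentSign s) k q
  have hT : 0 ≤ T := tsum_nonneg fun q =>
    mul_nonneg (Real.rpow_nonneg (wk_nonneg k q) _) (solutionDensity_nonneg ..)
  refine ⟨2 * 2 ^ (2 * s) * I * T + 1, by positivity, fun P hP 𝒜 h𝒜 Υ hΥ => ?_⟩
  calc ∫ α in Kset k P, Υ α * ‖weylSum 𝒜 k α‖ ^ (2 * t)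
      ≤ P ^ (2 * t - 2 * s) * ∫ α, arcMajorant k ω P α * ‖weylSum 𝒜 k α‖ ^ (2 * s) :=
        setIntegral_Kset_le hω hP h𝒜 ht hΥ
    _ ≤ P ^ (2 * t - 2 * s) * (2 * (2 * P) ^ (2 * s) * ((P ^ k)⁻¹ * I) * T) := by
        gcongr
        exact integral_arcMajorant_mul_norm_weylSum_pow_le (by omega) (by omega) (by omega) hω hP
          h𝒜
    _ = 2 * I * T * (P ^ (2 * t - 2 * s) * ((2 * P) ^ (2 * s) * (P ^ k)⁻¹)) := by ring
    _ = 2 * 2 ^ (2 * s) * I * T * P ^ (2 * t - k) := by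
        rw [rpow_sub_mul_two_mul_pow_mul_inv_pow hP]
        ring
    _ ≤ (2 * 2 ^ (2 * s) * I * T + 1) * P ^ (2 * t - k) := by
        gcongr
        exact le_add_of_nonneg_right zero_le_one

theorem stmt16 (k : ℕ) (hk : 4 ≤ k) (ω : ℝ) (hω : 1 < ω) (t : ℝ)
    (ht : ((k / 2 : ℕ) : ℝ) ≤ t) :
    ∃ C > (0 : ℝ), ∀ P : ℝ, 2 ≤ P → ∀ 𝒜 : Finset ℤ, 𝒜 ⊆ Finset.Icc 1 ⌊P⌋ →
      ∀ Υ : ℝ → ℝ,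
        (∀ a q : ℕ, a ≤ q → (q : ℝ) ≤ P → Nat.Coprime a q →
          ∀ α ∈ Set.Ico (0 : ℝ) 1, |(q : ℝ) * α - (a : ℝ)| ≤ P ^ ((1 : ℝ) - (k : ℝ)) →
            Υ α = wk k q ^ (2 * ω) * (1 + P ^ (k : ℕ) * |α - (a : ℝ) / (q : ℝ)|) ^ (-ω)) →
        (∫ α in Kset k P, Υ α * ‖∑ x ∈ 𝒜, eC (α * (x : ℝ) ^ k)‖ ^ (2 * t))
          ≤ C * P ^ (2 * t - (k : ℝ)) := by
  obtain ⟨C, hC, h⟩ := stmt16_general k (by omega) ω hω t ht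
  exact ⟨C, hC, fun P hP 𝒜 h𝒜 Υ hΥ => h P (by linarith) 𝒜 h𝒜 Υ
    fun α ⟨hα, a, q, haq, hqP, hcop, harc⟩ =>
      ⟨a, q, haq, hqP, hcop, hΥ a q haq hqP hcop α hα harc⟩⟩
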